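/- Let 0 < p ≤ 1 and let X = A + iB, where A and B are bounded self-adjoint operators on H, B is positive and invertible, and the self-adjoint operator sin(pπ)·A − cos(pπ)·B is positive and invertible (i.e. Im(e^{-ipπ}X) < 0). Then for every real λ > 0 the operator X + λI is invertible and −Im{ e^{-ipπ} X (X + λI)^{-1} } is positive and invertible. -/

import Mathlib

open ContinuousLinearMap MeasureTheory

variable {H : Type*} [NormedAddCommGroup H] [InnerProductSpace ℂ H] [CompleteSpace H]

/-- The imaginary part `(Y - Y*)/(2i)` of a bounded operator. -/
noncomputable def opIm (Y : H →L[ℂ] H) : H →L[ℂ] H := (2 * Complex.I)⁻¹ • (Y - star Y)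

theorem aux_unit (A B : H →L[ℂ] H) (hA : IsSelfAdjoint A) (hB : IsStrictlyPositive B) :
    IsUnit (A + Complex.I • B) := by
  obtain ⟨C, ⟨u, rfl⟩, hC, rfl⟩ :=
    CStarAlgebra.isStrictlyPositive_iff_exists_isUnit_and_isSelfAdjoint_and_eq_mul_self.1 hB
  have hu : star u = u := Units.ext hC
  have hui : IsSelfAdjoint ((u⁻¹ : (H →L[ℂ] H)ˣ) : H →L[ℂ] H) := by
    rw [IsSelfAdjoint, ← Units.coe_star, star_inv, hu]
  set v : H →L[ℂ] H := ((u⁻¹ : (H →L[ℂ] H)ˣ) : H →L[ℂ] H) with hv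
  have hS : IsSelfAdjoint (v * A * v) := by
    rw [IsSelfAdjoint, star_mul, star_mul, hui.star_eq, hA.star_eq, mul_assoc]
  have h1 : IsUnit (algebraMap ℂ (H →L[ℂ] H) (-Complex.I) - v * A * v) := by
    by_contra h
    have := hS.im_eq_zero_of_mem_spectrum (spectrum.mem_iff.2 h)
    simp at this
  have h2 : A + Complex.I • ((u : H →L[ℂ] H) * u) =
      u * (-(algebraMap ℂ (H →L[ℂ] H) (-Complex.I) - v * A * v)) * u := by
    have e1 : (u : H →L[ℂ] H) * v = 1 := u.mul_inv
    have e2 : v * (u : H →L[ℂ] H) = 1 := u.inv_mul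
    have e3 : (u : H →L[ℂ] H) * (v * A * v) * u = A := by
      rw [show (u : H →L[ℂ] H) * (v * A * v) * u = (u * v) * A * (v * u) by noncomm_ring, e1, e2]
      simp
    rw [neg_sub, mul_sub, sub_mul, e3, Algebra.algebraMap_eq_smul_one]
    simp
  rw [h2]
  exact (u.isUnit.mul h1.neg).mul u.isUnit

theorem aux_conj (A B X Z : H →L[ℂ] H) (hA : IsSelfAdjoint A) (hB : IsSelfAdjoint B)
    (hX : X = A + Complex.I • B) (t l : ℝ) (hZ : Z * (X + (l : ℂ) • 1) = 1) :
    star (X + (l : ℂ) • 1) *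
      (-(opIm (Complex.exp (-(t : ℝ) * Complex.I) • (X * Z)))) * (X + (l : ℂ) • 1) =
    Real.sin t • (star X * X) + l • (Real.sin t • A - Real.cos t • B) := by
  have hZ' : star (X + (l : ℂ) • 1) * star Z = 1 := by rw [← star_mul, hZ, star_one]
  have hY' : star (X + (l : ℂ) • 1) = star X + (l : ℂ) • 1 := by simp [star_add, star_smul]
  have he : Complex.exp (-(t : ℝ) * Complex.I) = (Real.cos t : ℂ) - Real.sin t * Complex.I := by
    rw [Complex.exp_mul_I]; simp [sub_eq_add_neg]
  have hs : star (Complex.exp (-(t : ℝ) * Complex.I)) =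
      (Real.cos t : ℂ) + Real.sin t * Complex.I := by
    rw [he]; simp [-Complex.ofReal_sin, -Complex.ofReal_cos]
  have hXs : star X = A - Complex.I • B := by
    rw [hX]; simp [star_add, star_smul, hA.star_eq, hB.star_eq, sub_eq_add_neg]
  set Y := X + (l : ℂ) • (1 : H →L[ℂ] H) with hY
  have k1 : star Y * (X * Z) * Y = star X * X + (l : ℂ) • X := by
    rw [mul_assoc, mul_assoc, hZ, hY', mul_one, add_mul, smul_mul_assoc, one_mul]
  have k2 : star Y * (star Z * star X) * Y = star X * X + (l : ℂ) • star X := by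
    rw [← mul_assoc, hZ', one_mul, hY, mul_add, mul_smul_comm, mul_one]
  have k3 : star Y * (-(opIm (Complex.exp (-(t : ℝ) * Complex.I) • (X * Z)))) * Y =
      -((2 * Complex.I)⁻¹ • (Complex.exp (-(t : ℝ) * Complex.I) • (star Y * (X * Z) * Y) -
        star (Complex.exp (-(t : ℝ) * Complex.I)) • (star Y * (star Z * star X) * Y))) := by
    simp only [opIm, star_smul, star_mul, mul_neg, neg_mul, mul_smul_comm, smul_mul_assoc,
      mul_sub, sub_mul]
  rw [k3, k1, k2, hs, he]
  generalize star X * X = Q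
  rw [hXs, hX]
  generalize Real.cos t = c
  generalize Real.sin t = s
  simp only [← Complex.coe_smul]
  have hI : Complex.I ≠ 0 := Complex.I_ne_zero
  have hI2 : Complex.I * Complex.I = -1 := Complex.I_mul_I
  match_scalars <;> field_simp <;> ring_nf <;> simp <;> ring_nf

/-- For `0 < p ≤ 1` and `X = A + iB` with `B > 0` and `sin(pπ)A − cos(pπ)B > 0`
(i.e. `Im(e^{-ipπ}X) < 0`): for every `λ > 0` the operator `X + λI` is invertible and
`−Im{e^{-ipπ} X (X + λI)⁻¹}` is positive and invertible. -/
theorem stmt18 [TopologicalSpace.SeparableSpace H] (hinf : ¬ FiniteDimensional ℂ H)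
    (p : ℝ) (hp0 : 0 < p) (hp1 : p ≤ 1)
    (A B X : H →L[ℂ] H) (hA : IsSelfAdjoint A) (hB : IsSelfAdjoint B)
    (hBpos : B.IsPositive) (hBU : IsUnit B)
    (hsec :
      (Real.sin (p * Real.pi) • A - Real.cos (p * Real.pi) • B).IsPositive ∧
        IsUnit (Real.sin (p * Real.pi) • A - Real.cos (p * Real.pi) • B))
    (hX : X = A + Complex.I • B) :
    ∀ l : ℝ, 0 < l →
      IsUnit (X + (l : ℂ) • 1) ∧
      (-(opIm (Complex.exp (-(p * Real.pi : ℝ) * Complex.I) •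
          (X * Ring.inverse (X + (l : ℂ) • 1))))).IsPositive ∧
      IsUnit (opIm (Complex.exp (-(p * Real.pi : ℝ) * Complex.I) •
          (X * Ring.inverse (X + (l : ℂ) • 1)))) := by
  intro l hl
  have hBs : IsStrictlyPositive B := hBU.isStrictlyPositive ((nonneg_iff_isPositive B).2 hBpos)
  have hY : IsUnit (X + (l : ℂ) • 1) := by
    have : IsSelfAdjoint (A + (l : ℂ) • (1 : H →L[ℂ] H)) := by
      simp [IsSelfAdjoint, star_add, star_smul, hA.star_eq]
    have := aux_unit _ B this hBs
    rw [hX]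
    convert this using 1
    abel
  have hD := aux_conj A B X _ hA hB hX (p * Real.pi) l (Ring.inverse_mul_cancel _ hY)
  have hsin : 0 ≤ Real.sin (p * Real.pi) :=
    Real.sin_nonneg_of_nonneg_of_le_pi (by positivity)
      (by nlinarith [Real.pi_pos])
  have hpos : IsStrictlyPositive (Real.sin (p * Real.pi) • (star X * X) +
      l • (Real.sin (p * Real.pi) • A - Real.cos (p * Real.pi) • B)) := by
    refine IsStrictlyPositive.nonneg_add (smul_nonneg hsin (star_mul_self_nonneg X)) ?_
    exact (hsec.2.isStrictlyPositive ((nonneg_iff_isPositive _).2 hsec.1)).smul hl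
  rw [← hD, hY.isStrictlyPositive_star_left_conjugate_iff] at hpos
  exact ⟨hY, (nonneg_iff_isPositive _).1 hpos.nonneg, by simpa using hpos.isUnit⟩
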